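/- Let (X, σ_X) be a one-sided subshift with the weak specification property, 𝓕 = {log f_n} an almost additive sequence of continuous functions on X, and ν ∈ M(X, σ_X) an invariant Gibbs measure for 𝓕 with constants P ∈ ℝ and C_0 > 0, i.e. C_0^{-1} ≤ ν[x_1…x_n]/(e^{-nP} f_n(x)) ≤ C_0 for all x ∈ X and n ∈ ℕ. Suppose that for every x ∈ X the limit r(x) := lim_{n→∞} log(ν[x_1…x_n]/ν[x_2…x_n]) + P exists in ℝ. Then r is a bounded Borel measurable function on X, for every μ ∈ M(X, σ_X) one has lim_{n→∞} (1/n) ∫ log f_n dμ = lim_{n→∞} (1/n) ∫ log(ν[x_1…x_n] e^{nP}) dμ(x) = ∫ r dμ, and ν is an invariant Gibbs measure for r. -/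

import Mathlib

open MeasureTheory Filter Topology

noncomputable section

/-- The one-sided shift map. -/
def shift {A : Type*} : (ℕ → A) → ℕ → A := fun x i => x (i + 1)

/-- A finite word appears in some point of `X`. -/
def AppearsIn {A : Type*} (X : Set (ℕ → A)) (w : List A) : Prop :=
  ∃ x ∈ X, ∃ m : ℕ, ∀ i : Fin w.length, x (m + i) = w.get i

/-- `X` is a (one-sided) subshift: a closed, shift-invariant set. -/
def IsSubshift {A : Type*} [TopologicalSpace A] (X : Set (ℕ → A)) : Prop :=
  IsClosed X ∧ shift '' X ⊆ X

/-- The weak specification property. -/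
def WeakSpec {A : Type*} (X : Set (ℕ → A)) : Prop :=
  ∃ p : ℕ, ∀ u v : List A, AppearsIn X u → AppearsIn X v →
    ∃ w : List A, w.length ≤ p ∧ AppearsIn X (u ++ w ++ v)

/-- The cylinder set `[x_1 … x_n]` inside `X`. -/
def cyl {A : Type*} (X : Set (ℕ → A)) (x : ℕ → A) (n : ℕ) : Set (ℕ → A) :=
  {z ∈ X | ∀ i < n, z i = x i}

/-- Birkhoff sum `(S_n g)(x)`. -/
def birk {A : Type*} (g : (ℕ → A) → ℝ) (n : ℕ) (x : ℕ → A) : ℝ :=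
  ∑ i ∈ Finset.range n, g (shift^[i] x)

/-- `μ` is a shift-invariant Borel probability measure concentrated on `X`,
i.e. an element of `M(X, σ_X)`. -/
def IsInvariantOn {A : Type*} [MeasurableSpace A] (μ : Measure (ℕ → A))
    (X : Set (ℕ → A)) : Prop :=
  IsProbabilityMeasure μ ∧ μ X = 1 ∧
    ∀ B : Set (ℕ → A), MeasurableSet B → μ (shift ⁻¹' B) = μ B

/-- `μ` is a Gibbs measure for the sequence `𝓕 = {log f_n}`. -/
def GibbsSeq {A : Type*} [MeasurableSpace A] (X : Set (ℕ → A))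
    (f : ℕ → (ℕ → A) → ℝ) (μ : Measure (ℕ → A)) : Prop :=
  ∃ P C : ℝ, 0 < C ∧ ∀ x ∈ X, ∀ n : ℕ, 1 ≤ n →
    C⁻¹ ≤ (μ (cyl X x n)).toReal / (Real.exp (-(n : ℝ) * P) * f n x) ∧
    (μ (cyl X x n)).toReal / (Real.exp (-(n : ℝ) * P) * f n x) ≤ C

/-- `μ` is a weak Gibbs measure for the sequence `𝓕 = {log f_n}`. -/
def WeakGibbsSeq {A : Type*} [MeasurableSpace A] (X : Set (ℕ → A))
    (f : ℕ → (ℕ → A) → ℝ) (μ : Measure (ℕ → A)) : Prop :=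
  ∃ P : ℝ, ∃ C : ℕ → ℝ, (∀ n : ℕ, 1 ≤ n → 0 < C n) ∧
    Tendsto (fun n : ℕ => Real.log (C n) / n) atTop (𝓝 0) ∧
    ∀ x ∈ X, ∀ n : ℕ, 1 ≤ n →
      (C n)⁻¹ ≤ (μ (cyl X x n)).toReal / (Real.exp (-(n : ℝ) * P) * f n x) ∧
      (μ (cyl X x n)).toReal / (Real.exp (-(n : ℝ) * P) * f n x) ≤ C n

/-- `μ` is a Gibbs measure for the (Borel measurable) function `g`. -/
def GibbsFun {A : Type*} [MeasurableSpace A] (X : Set (ℕ → A))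
    (g : (ℕ → A) → ℝ) (μ : Measure (ℕ → A)) : Prop :=
  GibbsSeq X (fun n x => Real.exp (birk g n x)) μ

/-- `μ` is a weak Gibbs measure for the (Borel measurable) function `g`. -/
def WeakGibbsFun {A : Type*} [MeasurableSpace A] (X : Set (ℕ → A))
    (g : (ℕ → A) → ℝ) (μ : Measure (ℕ → A)) : Prop :=
  WeakGibbsSeq X (fun n x => Real.exp (birk g n x)) μ

/-- The sequence `{log f_n}` is almost additive on `X` with constant `C`. -/
def AAOn {A : Type*} (X : Set (ℕ → A)) (f : ℕ → (ℕ → A) → ℝ) (C : ℝ) : Prop :=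
  ∀ x ∈ X, ∀ n m : ℕ, 1 ≤ n → 1 ≤ m →
    Real.exp (-C) * (f n x * f m (shift^[n] x)) ≤ f (n + m) x ∧
    f (n + m) x ≤ Real.exp C * (f n x * f m (shift^[n] x))

/-- The sequence `{log f_n}` is weakly almost additive on `X`. -/
def WeakAAOn {A : Type*} (X : Set (ℕ → A)) (f : ℕ → (ℕ → A) → ℝ) : Prop :=
  ∃ C : ℕ → ℝ, (∀ n : ℕ, 1 ≤ n → 0 < C n) ∧
    Tendsto (fun n : ℕ => C n / n) atTop (𝓝 0) ∧
    ∀ x ∈ X, ∀ n m : ℕ, 1 ≤ n → 1 ≤ m →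
      Real.exp (-(C n)) * (f n x * f m (shift^[n] x)) ≤ f (n + m) x ∧
      f (n + m) x ≤ Real.exp (C n) * (f n x * f m (shift^[n] x))

/-!
Put `L n x = log (ν[x_1…x_n] e^{nP})`. The Gibbs property says that `L n` is within `log C₀` of
`log (f n)`, so `L` inherits almost additivity from `f`. By definition `r` is the pointwise limit of
`L (n + 1) x - L n (σ x)`; adding these limits along the orbit of `x` telescopes, giving
`S_m r x = lim_n (L (m + n) x - L n (σ^m x))`, and almost additivity of `L` keeps every term of this
limit within a constant of `L m x`. Hence `S_m r`, `L m` and `log (f m)` agree up to a constant that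
depends on neither `m` nor `x`, which is the Gibbs property for `r`, and dividing the integrals
by `m` gives the equality of the limits.
-/

section AlmostAdditive

variable {α : Type*} {T : α → α} {X : Set α} {L L' : ℕ → α → ℝ} {r : α → ℝ} {c K : ℝ}

/-- Almost additivity of a sequence of real functions along a self-map `T` on the set `X`, in
additive form: the sequence `{log f_n}` of the paper corresponds to `L n = log (f n)`. The `0`-th
function is unconstrained. -/
def IsAlmostAdditiveOn (T : α → α) (X : Set α) (L : ℕ → α → ℝ) (K : ℝ) : Prop :=
  ∀ x ∈ X, ∀ n m : ℕ, 1 ≤ n → 1 ≤ m → |L (n + m) x - L n x - L m (T^[n] x)| ≤ K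

theorem IsAlmostAdditiveOn.of_abs_sub_le (hL : IsAlmostAdditiveOn T X L K)
    (hT : Set.MapsTo T X X) (hLL' : ∀ x ∈ X, ∀ n, 1 ≤ n → |L' n x - L n x| ≤ c) :
    IsAlmostAdditiveOn T X L' (K + 3 * c) := by
  intro x hx n m hn hm
  have hadd := abs_le.1 (hL x hx n m hn hm)
  have hsum := abs_le.1 (hLL' x hx (n + m) (by omega))
  have hfst := abs_le.1 (hLL' x hx n hn)
  have hsnd := abs_le.1 (hLL' _ (hT.iterate n hx) m hm)
  exact abs_le.2 ⟨by linarith, by linarith⟩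

theorem tendsto_sub_iterate_birkhoffSum (hT : Set.MapsTo T X X)
    (hr : ∀ x ∈ X, Tendsto (fun n => L (n + 1) x - L n (T x)) atTop (𝓝 (r x)))
    {x : α} (hx : x ∈ X) (m : ℕ) :
    Tendsto (fun n => L (n + m) x - L n (T^[m] x)) atTop (𝓝 (birkhoffSum T r m x)) := by
  induction m with
  | zero => simp
  | succ m ih =>
    rw [birkhoffSum_succ]
    refine ((ih.comp (tendsto_add_atTop_nat 1)).add (hr _ (hT.iterate m hx))).congr fun n => ?_
    simp only [Function.comp_apply, Function.iterate_succ_apply', add_assoc, add_comm 1 m]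
    ring

theorem IsAlmostAdditiveOn.abs_sub_birkhoffSum_le (hL : IsAlmostAdditiveOn T X L K)
    (hT : Set.MapsTo T X X)
    (hr : ∀ x ∈ X, Tendsto (fun n => L (n + 1) x - L n (T x)) atTop (𝓝 (r x)))
    {x : α} (hx : x ∈ X) {m : ℕ} (hm : 1 ≤ m) : |L m x - birkhoffSum T r m x| ≤ K := by
  rw [abs_sub_comm]
  refine le_of_tendsto ((tendsto_sub_iterate_birkhoffSum hT hr hx m).sub_const (L m x)).abs ?_
  filter_upwards [eventually_ge_atTop 1] with n hn
  rw [sub_right_comm, add_comm n m]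
  exact hL x hx m n hm hn

end AlmostAdditive

section BirkhoffIntegral

variable {α E : Type*} [MeasurableSpace α] [NormedAddCommGroup E]
  {μ : Measure α} {T : α → α} {g : α → E}

theorem integrable_birkhoffSum (hT : MeasurePreserving T μ μ) (hg : Integrable g μ) (n : ℕ) :
    Integrable (birkhoffSum T g n) μ :=
  integrable_finsetSum _ fun i _ => (hT.iterate i).integrable_comp_of_integrable hg

variable [NormedSpace ℝ E]

theorem integral_comp_iterate (hT : MeasurePreserving T μ μ) (hg : AEStronglyMeasurable g μ)
    (i : ℕ) : ∫ x, g (T^[i] x) ∂μ = ∫ x, g x ∂μ := by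
  have hTi := hT.iterate i
  rw [← integral_map hTi.aemeasurable (by rwa [hTi.map_eq]), hTi.map_eq]

theorem integral_birkhoffSum (hT : MeasurePreserving T μ μ) (hg : Integrable g μ) (n : ℕ) :
    ∫ x, birkhoffSum T g n x ∂μ = (n : ℝ) • ∫ x, g x ∂μ := by
  have hgi : ∀ i ∈ Finset.range n, Integrable (fun x => g (T^[i] x)) μ :=
    fun i _ => (hT.iterate i).integrable_comp_of_integrable hg
  simp only [birkhoffSum, integral_finsetSum _ hgi]
  simp [integral_comp_iterate hT hg.aestronglyMeasurable, Nat.cast_smul_eq_nsmul]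

variable [IsFiniteMeasure μ]

theorem norm_integral_sub_smul_integral_le (hT : MeasurePreserving T μ μ) (hg : Integrable g μ)
    {h : α → E} (hh : AEStronglyMeasurable h μ) {n : ℕ} {K : ℝ}
    (hK : ∀ᵐ x ∂μ, ‖h x - birkhoffSum T g n x‖ ≤ K) :
    ‖∫ x, h x ∂μ - (n : ℝ) • ∫ x, g x ∂μ‖ ≤ K * μ.real Set.univ := by
  have hS := integrable_birkhoffSum hT hg n
  have hdiff : Integrable (h - birkhoffSum T g n) μ :=
    .of_bound (hh.sub hS.aestronglyMeasurable) K hK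
  have hh_int : Integrable h μ := by simpa using hdiff.add hS
  rw [← integral_birkhoffSum hT hg, ← integral_sub hh_int hS]
  exact norm_integral_le_of_norm_le_const hK

theorem tendsto_inv_smul_integral_of_norm_sub_birkhoffSum_le (hT : MeasurePreserving T μ μ)
    (hg : Integrable g μ) {h : ℕ → α → E} {K : ℝ}
    (hh : ∀ n, 1 ≤ n → AEStronglyMeasurable (h n) μ)
    (hK : ∀ n, 1 ≤ n → ∀ᵐ x ∂μ, ‖h n x - birkhoffSum T g n x‖ ≤ K) :
    Tendsto (fun n : ℕ => (1 / (n : ℝ)) • ∫ x, h n x ∂μ) atTop (𝓝 (∫ x, g x ∂μ)) := by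
  rw [tendsto_iff_norm_sub_tendsto_zero]
  refine squeeze_zero' (.of_forall fun _ => norm_nonneg _) ?_
    (tendsto_const_div_atTop_nhds_zero_nat (K * μ.real Set.univ))
  filter_upwards [eventually_ge_atTop 1] with n hn
  have hn0 : (0 : ℝ) < n := by exact_mod_cast hn
  calc ‖(1 / (n : ℝ)) • ∫ x, h n x ∂μ - ∫ x, g x ∂μ‖
      = ‖(1 / (n : ℝ)) • (∫ x, h n x ∂μ - (n : ℝ) • ∫ x, g x ∂μ)‖ := by
        rw [smul_sub, smul_smul, one_div_mul_cancel hn0.ne', one_smul]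
    _ = ‖∫ x, h n x ∂μ - (n : ℝ) • ∫ x, g x ∂μ‖ / n := by
        rw [norm_smul, Real.norm_of_nonneg (by positivity), one_div_mul_eq_div]
    _ ≤ K * μ.real Set.univ / n := by
        gcongr
        exact norm_integral_sub_smul_integral_le hT hg (hh n hn) (hK n hn)

end BirkhoffIntegral

section InvariantMeasure

variable {A : Type*} [MeasurableSpace A] {μ : Measure (ℕ → A)} {X : Set (ℕ → A)}

theorem measurable_shift : Measurable (shift : (ℕ → A) → ℕ → A) :=
  measurable_pi_lambda _ fun i => measurable_pi_apply (i + 1)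

theorem IsInvariantOn.measurePreserving_shift (hμ : IsInvariantOn μ X) :
    MeasurePreserving shift μ μ where
  measurable := measurable_shift
  map_eq := by
    ext B hB
    rw [Measure.map_apply measurable_shift hB, hμ.2.2 B hB]

theorem IsInvariantOn.ae_mem (hμ : IsInvariantOn μ X) (hX : MeasurableSet X) :
    ∀ᵐ x ∂μ, x ∈ X :=
  have := hμ.1
  (mem_ae_iff_prob_eq_one hX).2 hμ.2.1

theorem IsInvariantOn.aestronglyMeasurable (hμ : IsInvariantOn μ X) (hX : MeasurableSet X)
    {g : (ℕ → A) → ℝ} (hg : Measurable fun x : X => g x) : AEStronglyMeasurable g μ := by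
  have hg_restrict := aemeasurable_restrict_of_measurable_subtype (μ := μ) hX hg
  rw [Measure.restrict_eq_self_of_ae_mem (hμ.ae_mem hX)] at hg_restrict
  exact hg_restrict.aestronglyMeasurable

theorem IsInvariantOn.tendsto_inv_mul_integral (hμ : IsInvariantOn μ X) (hX : MeasurableSet X)
    {r : (ℕ → A) → ℝ} (hr : Measurable fun x : X => r x) {B : ℝ} (hB : ∀ x ∈ X, |r x| ≤ B)
    {h : ℕ → (ℕ → A) → ℝ} (hh : ∀ n, 1 ≤ n → Measurable fun x : X => h n x) {K : ℝ}
    (hK : ∀ x ∈ X, ∀ n, 1 ≤ n → |h n x - birkhoffSum shift r n x| ≤ K) :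
    Tendsto (fun n : ℕ => (1 / (n : ℝ)) * ∫ x, h n x ∂μ) atTop (𝓝 (∫ x, r x ∂μ)) := by
  have := hμ.1
  have hr_int : Integrable r μ :=
    .of_bound (hμ.aestronglyMeasurable hX hr) B ((hμ.ae_mem hX).mono hB)
  exact tendsto_inv_smul_integral_of_norm_sub_birkhoffSum_le hμ.measurePreserving_shift hr_int
    (fun n hn => hμ.aestronglyMeasurable hX (hh n hn))
    fun n hn => (hμ.ae_mem hX).mono fun x hx => hK x hx n hn

end InvariantMeasure

section Cylinder

variable {A : Type*} [MeasurableSpace A] {X : Set (ℕ → A)} {ν : Measure (ℕ → A)} {P : ℝ}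

/-- The logarithm of the cylinder measure `ν[x_1…x_n]` normalized by the pressure `P`. It equals
`log 0 = 0` where the cylinder has measure `0` or `∞`. -/
def logCyl (X : Set (ℕ → A)) (ν : Measure (ℕ → A)) (P : ℝ) (n : ℕ) (x : ℕ → A) : ℝ :=
  Real.log ((ν (cyl X x n)).toReal * Real.exp ((n : ℝ) * P))

theorem exists_logCyl_eq_comp_restrict (X : Set (ℕ → A)) (ν : Measure (ℕ → A)) (P : ℝ) (n : ℕ) :
    ∃ φ : (Fin n → A) → ℝ, ∀ x, logCyl X ν P n x = φ fun i => x i := by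
  refine ⟨fun w => Real.log ((ν {z ∈ X | ∀ i : Fin n, z i = w i}).toReal *
    Real.exp ((n : ℝ) * P)), fun x => ?_⟩
  simp only [logCyl, cyl, Fin.forall_iff]

theorem measurable_logCyl [Countable A] [MeasurableSingletonClass A] (X : Set (ℕ → A))
    (ν : Measure (ℕ → A)) (P : ℝ) (n : ℕ) : Measurable (logCyl X ν P n) := by
  obtain ⟨φ, hφ⟩ := exists_logCyl_eq_comp_restrict X ν P n
  rw [funext hφ]
  exact (measurable_of_countable φ).comp (measurable_pi_lambda _ fun i => measurable_pi_apply _)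

theorem exists_abs_logCyl_le [Finite A] (X : Set (ℕ → A)) (ν : Measure (ℕ → A)) (P : ℝ) (n : ℕ) :
    ∃ D, ∀ x, |logCyl X ν P n x| ≤ D := by
  obtain ⟨φ, hφ⟩ := exists_logCyl_eq_comp_restrict X ν P n
  obtain ⟨D, hD⟩ := Finite.exists_le fun w => |φ w|
  exact ⟨D, fun x => hφ x ▸ hD _⟩

theorem exists_abs_le_of_abs_logCyl_sub_le [Finite A] {r : (ℕ → A) → ℝ} {n : ℕ} {K : ℝ}
    (hK : ∀ x ∈ X, |logCyl X ν P n x - r x| ≤ K) : ∃ B, ∀ x ∈ X, |r x| ≤ B := by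
  obtain ⟨D, hD⟩ := exists_abs_logCyl_le X ν P n
  refine ⟨D + K, fun x hx => ?_⟩
  calc |r x| = |logCyl X ν P n x - (logCyl X ν P n x - r x)| := by rw [sub_sub_cancel]
    _ ≤ |logCyl X ν P n x| + |logCyl X ν P n x - r x| := abs_sub _ _
    _ ≤ D + K := add_le_add (hD x) (hK x hx)

theorem logCyl_succ_sub_logCyl_shift {x : ℕ → A} {n : ℕ} (hx : 0 < (ν (cyl X x (n + 1))).toReal)
    (hσx : 0 < (ν (cyl X (shift x) n)).toReal) :
    logCyl X ν P (n + 1) x - logCyl X ν P n (shift x) =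
      Real.log ((ν (cyl X x (n + 1))).toReal / (ν (cyl X (shift x) n)).toReal) + P := by
  simp only [logCyl, Real.log_mul hx.ne' (Real.exp_ne_zero _),
    Real.log_mul hσx.ne' (Real.exp_ne_zero _), Real.log_div hx.ne' hσx.ne', Real.log_exp]
  push_cast
  ring

theorem measurable_of_tendsto_logCyl_sub [Countable A] [MeasurableSingletonClass A]
    {r : (ℕ → A) → ℝ}
    (hr : ∀ x ∈ X, Tendsto (fun n => logCyl X ν P (n + 1) x - logCyl X ν P n (shift x)) atTop
      (𝓝 (r x))) :
    Measurable fun x : X => r x :=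
  measurable_of_tendsto_metrizable
    (fun n => ((measurable_logCyl X ν P (n + 1)).sub
      ((measurable_logCyl X ν P n).comp measurable_shift)).comp measurable_subtype_coe)
    (tendsto_pi_nhds.2 fun x => hr x x.2)

end Cylinder

theorem birk_eq_birkhoffSum {A : Type*} (g : (ℕ → A) → ℝ) (n : ℕ) (x : ℕ → A) :
    birk g n x = birkhoffSum shift g n x := rfl

theorem inv_le_div_and_div_le_iff_abs_log_sub_log_le {a b C : ℝ} (ha : 0 < a) (hb : 0 < b)
    (hC : 0 < C) :
    (C⁻¹ ≤ a / b ∧ a / b ≤ C) ↔ |Real.log a - Real.log b| ≤ Real.log C := by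
  rw [← Real.log_div ha.ne' hb.ne', abs_le, ← Real.log_inv,
    Real.log_le_log_iff (inv_pos.2 hC) (div_pos ha hb), Real.log_le_log_iff (div_pos ha hb) hC]

theorem AAOn.isAlmostAdditiveOn_log {A : Type*} {X : Set (ℕ → A)} {f : ℕ → (ℕ → A) → ℝ} {C : ℝ}
    (hf : AAOn X f C) (hX : Set.MapsTo shift X X) (hfpos : ∀ n, 1 ≤ n → ∀ x ∈ X, 0 < f n x) :
    IsAlmostAdditiveOn shift X (fun n x => Real.log (f n x)) C := by
  intro x hx n m hn hm
  have hfst := hfpos n hn x hx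
  have hsnd := hfpos m hm _ (hX.iterate n hx)
  have hprod := mul_pos hfst hsnd
  rw [sub_sub, ← Real.log_mul hfst.ne' hsnd.ne']
  convert (inv_le_div_and_div_le_iff_abs_log_sub_log_le (hfpos (n + m) (by omega) x hx) hprod
    (Real.exp_pos C)).1 ?_
  · exact (Real.log_exp C).symm
  · rw [← Real.exp_neg, le_div_iff₀ hprod, div_le_iff₀ hprod]
    exact hf x hx n m hn hm

section Gibbs

variable {A : Type*} [MeasurableSpace A] {X : Set (ℕ → A)} {f : ℕ → (ℕ → A) → ℝ}
  {ν : Measure (ℕ → A)} {P C : ℝ}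

/-- The two-sided Gibbs estimate for `{log f_n}` with explicit pressure `P` and constant `C`;
`GibbsSeq X f ν` asserts it for some `P` and some `C > 0`. -/
def HasGibbsBounds (X : Set (ℕ → A)) (f : ℕ → (ℕ → A) → ℝ) (ν : Measure (ℕ → A))
    (P C : ℝ) : Prop :=
  ∀ x ∈ X, ∀ n : ℕ, 1 ≤ n →
    C⁻¹ ≤ (ν (cyl X x n)).toReal / (Real.exp (-(n : ℝ) * P) * f n x) ∧
    (ν (cyl X x n)).toReal / (Real.exp (-(n : ℝ) * P) * f n x) ≤ C

theorem HasGibbsBounds.measure_cyl_pos (hν : HasGibbsBounds X f ν P C) (hC : 0 < C)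
    (hfpos : ∀ n, 1 ≤ n → ∀ x ∈ X, 0 < f n x) {x : ℕ → A} (hx : x ∈ X) {n : ℕ} (hn : 1 ≤ n) :
    0 < (ν (cyl X x n)).toReal :=
  pos_of_mul_pos_left ((inv_pos.2 hC).trans_le (hν x hx n hn).1)
    (inv_nonneg.2 (mul_pos (Real.exp_pos _) (hfpos n hn x hx)).le)

theorem hasGibbsBounds_iff_abs_logCyl_sub_log_le (hC : 0 < C)
    (hfpos : ∀ n, 1 ≤ n → ∀ x ∈ X, 0 < f n x)
    (hνpos : ∀ x ∈ X, ∀ n, 1 ≤ n → 0 < (ν (cyl X x n)).toReal) :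
    HasGibbsBounds X f ν P C ↔
      ∀ x ∈ X, ∀ n, 1 ≤ n → |logCyl X ν P n x - Real.log (f n x)| ≤ Real.log C := by
  refine forall₄_congr fun x hx n hn => ?_
  rw [neg_mul, Real.exp_neg, ← div_div, div_inv_eq_mul, logCyl]
  exact inv_le_div_and_div_le_iff_abs_log_sub_log_le
    (mul_pos (hνpos x hx n hn) (Real.exp_pos _)) (hfpos n hn x hx) hC

theorem gibbsFun_of_abs_logCyl_sub_birkhoffSum_le
    (hνpos : ∀ x ∈ X, ∀ n, 1 ≤ n → 0 < (ν (cyl X x n)).toReal) {r : (ℕ → A) → ℝ} {K : ℝ}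
    (hK : ∀ x ∈ X, ∀ n, 1 ≤ n → |logCyl X ν P n x - birkhoffSum shift r n x| ≤ K) :
    GibbsFun X r ν := by
  refine ⟨P, Real.exp K, Real.exp_pos K, (hasGibbsBounds_iff_abs_logCyl_sub_log_le (Real.exp_pos K)
    (fun _ _ _ _ => Real.exp_pos _) hνpos).2 fun x hx n hn => ?_⟩
  simpa only [Real.log_exp, birk_eq_birkhoffSum] using hK x hx n hn

theorem tendsto_logCyl_sub_logCyl_shift (hX : Set.MapsTo shift X X)
    (hνpos : ∀ x ∈ X, ∀ n, 1 ≤ n → 0 < (ν (cyl X x n)).toReal) {r : (ℕ → A) → ℝ}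
    (hr : ∀ x ∈ X, Tendsto (fun n : ℕ =>
      Real.log ((ν (cyl X x (n + 2))).toReal / (ν (cyl X (shift x) (n + 1))).toReal) + P)
      atTop (𝓝 (r x))) :
    ∀ x ∈ X, Tendsto (fun n => logCyl X ν P (n + 1) x - logCyl X ν P n (shift x)) atTop
      (𝓝 (r x)) := by
  intro x hx
  rw [← tendsto_add_atTop_iff_nat 1]
  refine (hr x hx).congr fun n => ?_
  exact (logCyl_succ_sub_logCyl_shift (hνpos x hx _ (by omega))
    (hνpos _ (hX hx) _ (by omega))).symm

end Gibbs

theorem stmt_8_general {A : Type*} [Finite A] [MeasurableSpace A] [MeasurableSingletonClass A]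
    {X : Set (ℕ → A)} (hX : MeasurableSet X) (hσ : Set.MapsTo shift X X)
    {f : ℕ → (ℕ → A) → ℝ} (hfm : ∀ n, 1 ≤ n → Measurable fun x : X => f n x)
    (hfpos : ∀ n, 1 ≤ n → ∀ x ∈ X, 0 < f n x) {C : ℝ} (hAA : AAOn X f C)
    {ν : Measure (ℕ → A)} {P C₀ : ℝ} (hC₀ : 0 < C₀) (hGibbs : HasGibbsBounds X f ν P C₀)
    {r : (ℕ → A) → ℝ}
    (hr : ∀ x ∈ X, Tendsto (fun n : ℕ =>
      Real.log ((ν (cyl X x (n + 2))).toReal / (ν (cyl X (shift x) (n + 1))).toReal) + P)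
      atTop (𝓝 (r x))) :
    Measurable (fun x : X => r x) ∧
    (∃ B : ℝ, ∀ x ∈ X, |r x| ≤ B) ∧
    (∀ μ : Measure (ℕ → A), IsInvariantOn μ X →
      Tendsto (fun n : ℕ => (1 / (n : ℝ)) * ∫ x, Real.log (f n x) ∂μ) atTop
        (𝓝 (∫ x, r x ∂μ)) ∧
      Tendsto (fun n : ℕ => (1 / (n : ℝ)) *
          ∫ x, Real.log ((ν (cyl X x n)).toReal * Real.exp ((n : ℝ) * P)) ∂μ) atTop
        (𝓝 (∫ x, r x ∂μ))) ∧
    GibbsFun X r ν := by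
  have hνpos : ∀ x ∈ X, ∀ n, 1 ≤ n → 0 < (ν (cyl X x n)).toReal :=
    fun x hx n hn => hGibbs.measure_cyl_pos hC₀ hfpos hx hn
  have hLf := (hasGibbsBounds_iff_abs_logCyl_sub_log_le hC₀ hfpos hνpos).1 hGibbs
  have hr' := tendsto_logCyl_sub_logCyl_shift hσ hνpos hr
  have hLadd : IsAlmostAdditiveOn shift X (logCyl X ν P) (C + 3 * Real.log C₀) :=
    (hAA.isAlmostAdditiveOn_log hσ hfpos).of_abs_sub_le hσ hLf
  obtain ⟨K, hLr⟩ : ∃ K, ∀ x ∈ X, ∀ n, 1 ≤ n → |logCyl X ν P n x - birkhoffSum shift r n x| ≤ K :=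
    ⟨_, fun x hx n hn => hLadd.abs_sub_birkhoffSum_le hσ hr' hx hn⟩
  have hfr : ∀ x ∈ X, ∀ n, 1 ≤ n →
      |Real.log (f n x) - birkhoffSum shift r n x| ≤ Real.log C₀ + K := fun x hx n hn =>
    (abs_sub_le _ (logCyl X ν P n x) _).trans
      (add_le_add ((abs_sub_comm _ _).trans_le (hLf x hx n hn)) (hLr x hx n hn))
  have hrm : Measurable fun x : X => r x := measurable_of_tendsto_logCyl_sub hr'
  obtain ⟨B, hB⟩ : ∃ B, ∀ x ∈ X, |r x| ≤ B :=
    exists_abs_le_of_abs_logCyl_sub_le fun x hx => by simpa using hLr x hx 1 le_rfl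
  refine ⟨hrm, ⟨B, hB⟩, fun μ hμ => ⟨?_, ?_⟩, gibbsFun_of_abs_logCyl_sub_birkhoffSum_le hνpos hLr⟩
  · exact hμ.tendsto_inv_mul_integral hX hrm hB (fun n hn => (hfm n hn).log) hfr
  · exact hμ.tendsto_inv_mul_integral hX hrm hB
      (fun n _ => (measurable_logCyl X ν P n).comp measurable_subtype_coe) hLr

/-- Theorem `cando1` (i): for an almost additive `𝓕` with invariant
Gibbs measure `ν`, if `r(x) = lim log(ν[x_1…x_n]/ν[x_2…x_n]) + P` exists everywhere,
then `r` is bounded Borel measurable, the limits of `(1/n)∫ log f_n dμ` and of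
`(1/n)∫ log(ν[x_1…x_n]e^{nP}) dμ` both equal `∫ r dμ` for every invariant `μ`, and `ν`
is an invariant Gibbs measure for `r`. -/
theorem stmt_8 {k : ℕ} (X : Set (ℕ → Fin k))
    (hX : IsSubshift X) (hspec : WeakSpec X)
    (f : ℕ → (ℕ → Fin k) → ℝ)
    (hfc : ∀ n : ℕ, 1 ≤ n → ContinuousOn (f n) X)
    (hfpos : ∀ n : ℕ, 1 ≤ n → ∀ x ∈ X, 0 < f n x)
    (hAA : ∃ C : ℝ, 0 < C ∧ AAOn X f C)
    (ν : Measure (ℕ → Fin k)) (hν : IsInvariantOn ν X)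
    (P C₀ : ℝ) (hC₀ : 0 < C₀)
    (hGibbs : ∀ x ∈ X, ∀ n : ℕ, 1 ≤ n →
      C₀⁻¹ ≤ (ν (cyl X x n)).toReal / (Real.exp (-(n : ℝ) * P) * f n x) ∧
      (ν (cyl X x n)).toReal / (Real.exp (-(n : ℝ) * P) * f n x) ≤ C₀)
    (r : (ℕ → Fin k) → ℝ)
    (hr : ∀ x ∈ X, Tendsto (fun n : ℕ =>
      Real.log ((ν (cyl X x (n + 2))).toReal / (ν (cyl X (shift x) (n + 1))).toReal) + P)
      atTop (𝓝 (r x))) :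
    Measurable (fun x : X => r ↑x) ∧
    (∃ B : ℝ, ∀ x ∈ X, |r x| ≤ B) ∧
    (∀ μ : Measure (ℕ → Fin k), IsInvariantOn μ X →
      Tendsto (fun n : ℕ => (1 / (n : ℝ)) * ∫ x, Real.log (f n x) ∂μ) atTop
        (𝓝 (∫ x, r x ∂μ)) ∧
      Tendsto (fun n : ℕ => (1 / (n : ℝ)) *
          ∫ x, Real.log ((ν (cyl X x n)).toReal * Real.exp ((n : ℝ) * P)) ∂μ) atTop
        (𝓝 (∫ x, r x ∂μ))) ∧
    GibbsFun X r ν := by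
  obtain ⟨C, -, hAA⟩ := hAA
  exact stmt_8_general hX.1.measurableSet (Set.mapsTo_iff_image_subset.2 hX.2)
    (fun n hn => (hfc n hn).domRestrict.measurable) hfpos hAA hC₀ hGibbs hr
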